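/- Let C > 0 and let g : ℝ → ℝ be continuously differentiable with g(0) = 0. Then for every t > 0, the function F(t) = ∫₀ᵗ C/√(t−u) · g(u) du is differentiable at t and F'(t) = ∫₀ᵗ C/√(t−u) · g'(u) du. -/

import Mathlib

open Set Filter Topology MeasureTheory in
/-- Since `g(0) = 0`, the time derivative of the convolution of the weakly singular
kernel `K(t) = C/√t` with `g` equals the convolution of `K` with `g'`. -/
theorem stmt3 (C : ℝ) (hC : 0 < C) (g g' : ℝ → ℝ)
    (hg : ∀ u, HasDerivAt g (g' u) u) (hg' : Continuous g')
    (hg0 : g 0 = 0) :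
    ∀ t > (0:ℝ), HasDerivAt (fun t' => ∫ u in (0:ℝ)..t', C / Real.sqrt (t' - u) * g u)
      (∫ u in (0:ℝ)..t, C / Real.sqrt (t - u) * g' u) t := by
  intro t ht
  have hgc : Continuous g := continuous_iff_continuousAt.2 fun u => (hg u).continuousAt
  have hK : ∀ a b : ℝ, IntervalIntegrable (fun v : ℝ => C / Real.sqrt v) volume 0 (t+1) := by
    intro a b
    have h1 : IntervalIntegrable (fun v : ℝ => C * v ^ (-(1/2) : ℝ)) volume 0 (t+1) :=
      (intervalIntegral.intervalIntegrable_rpow' (by norm_num)).const_mul C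
    refine h1.congr ?_
    intro v hv
    rw [uIoc_of_le (by linarith)] at hv
    simp only [Real.sqrt_eq_rpow, Real.rpow_neg hv.1.le, div_eq_mul_inv]
  have hK := hK 0 0
  obtain ⟨M, hM⟩ := (isCompact_Icc (a := (0:ℝ)) (b := t+1)).exists_bound_of_continuousOn
    hg'.continuousOn
  have hM0 : 0 ≤ M := (norm_nonneg _).trans (hM 0 ⟨le_rfl, by linarith⟩)
  have hlip : ∀ x ∈ Icc 0 (t+1), ∀ y ∈ Icc 0 (t+1), ‖g y - g x‖ ≤ M * ‖y - x‖ := by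
    intro x hx y hy
    exact (convex_Icc 0 (t+1)).norm_image_sub_le_of_norm_hasDerivWithin_le
      (fun z _ => (hg z).hasDerivWithinAt) hM hx hy
  have hkm : Measurable (fun v : ℝ => C / Real.sqrt v) := by fun_prop
  have key := intervalIntegral.hasDerivAt_integral_of_dominated_loc_of_lip
    (μ := volume) (a := 0) (b := t+1) (x₀ := t) (s := Ioo 0 (t+1))
    (F := fun x v => C / Real.sqrt v * g (max (x - v) 0))
    (F' := fun v => C / Real.sqrt v * (if v < t then g' (t - v) else 0))
    (bound := fun v => C / Real.sqrt v * M)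
    (Ioo_mem_nhds ht (by linarith))
    (Eventually.of_forall fun x => by
      refine Measurable.aestronglyMeasurable ?_
      exact hkm.mul (hgc.measurable.comp (by fun_prop)))
    (hK.mul_continuousOn (by fun_prop))
    (by
      refine Measurable.aestronglyMeasurable ?_
      exact hkm.mul (Measurable.ite measurableSet_Iio
        (hg'.measurable.comp (by fun_prop)) measurable_const))
    (by
      refine Eventually.of_forall fun v hv => ?_
      rw [uIoc_of_le (by linarith)] at hv
      have hk : 0 ≤ C / Real.sqrt v := by positivity
      refine LipschitzOnWith.of_dist_le_mul fun x hx y hy => ?_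
      rw [Real.coe_nnabs, abs_of_nonneg (mul_nonneg hk hM0), dist_eq_norm, dist_eq_norm,
        ← mul_sub, norm_mul, Real.norm_of_nonneg hk, mul_assoc]
      refine mul_le_mul_of_nonneg_left ?_ hk
      have hmem : ∀ z ∈ Ioo 0 (t+1), max (z - v) 0 ∈ Icc 0 (t+1) := fun z hz =>
        ⟨le_max_right _ _, max_le (by linarith [hz.2, hv.1]) (by linarith)⟩
      refine (hlip _ (hmem y hy) _ (hmem x hx)).trans ?_
      refine mul_le_mul_of_nonneg_left ?_ hM0
      refine (abs_max_sub_max_le_abs _ _ _).trans ?_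
      simp)
    (hK.mul_const M)
    (by
      have hne : ∀ᵐ v : ℝ, v ≠ t := by simp [ae_iff]
      filter_upwards [hne] with v hv _
      refine HasDerivAt.const_mul _ ?_
      rcases lt_or_gt_of_ne hv with h | h
      · rw [if_pos h]
        have h2 : HasDerivAt (fun x => g (x - v)) (g' (t - v)) t := by
          simpa using (hg (t - v)).comp_sub_const t v
        refine h2.congr_of_eventuallyEq ?_
        filter_upwards [lt_mem_nhds h] with x hx
        rw [max_eq_left (by linarith)]
      · rw [if_neg (not_lt.2 h.le)]
        refine (hasDerivAt_const t (g 0)).congr_of_eventuallyEq ?_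
        filter_upwards [gt_mem_nhds h] with x hx
        rw [max_eq_right (by linarith)])
  obtain ⟨hint, hder⟩ := key
  have split : ∀ x ∈ Ioo 0 (t+1), ∀ f k : ℝ → ℝ, IntervalIntegrable f volume 0 (t+1) →
      (∀ v, x < v → f v = 0) → (∀ v, 0 < v → v < x → f v = C / Real.sqrt v * k (x - v)) →
      ∫ v in (0:ℝ)..(t+1), f v = ∫ u in (0:ℝ)..x, C / Real.sqrt (x - u) * k u := by
    intro x hx f k hf h0 h1
    have hxm : x ∈ uIcc 0 (t+1) := by rw [uIcc_of_le (by linarith)]; exact ⟨hx.1.le, hx.2.le⟩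
    rw [← intervalIntegral.integral_add_adjacent_intervals (b := x)
      (hf.mono_set (uIcc_subset_uIcc left_mem_uIcc hxm))
      (hf.mono_set (uIcc_subset_uIcc hxm right_mem_uIcc))]
    have e2 : ∫ v in x..(t+1), f v = 0 := by
      refine intervalIntegral.integral_zero_ae (Eventually.of_forall fun v hv => ?_)
      rw [uIoc_of_le hx.2.le] at hv
      exact h0 v hv.1
    have e1 : ∫ v in (0:ℝ)..x, f v = ∫ v in (0:ℝ)..x, C / Real.sqrt v * k (x - v) := by
      have hne : ∀ᵐ v : ℝ, v ≠ x := by simp [ae_iff]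
      refine intervalIntegral.integral_congr_ae ?_
      filter_upwards [hne] with v hv hv2
      rw [uIoc_of_le hx.1.le] at hv2
      exact h1 v hv2.1 (lt_of_le_of_ne hv2.2 hv)
    have e3 := intervalIntegral.integral_comp_sub_left (a := 0) (b := x)
      (fun u => C / Real.sqrt (x - u) * k u) x
    simp only [sub_sub_cancel, sub_self, sub_zero] at e3
    rw [e2, e1, add_zero, e3]
  have htm : t ∈ Ioo 0 (t+1) := ⟨ht, by linarith⟩
  rw [split t htm _ g' hint (fun v hv => by simp [not_lt.2 hv.le])
    (fun v _ hv => by simp [hv])] at hder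
  refine hder.congr_of_eventuallyEq ?_
  filter_upwards [Ioo_mem_nhds htm.1 htm.2] with x hx
  refine (split x hx _ g (hK.mul_continuousOn (by fun_prop)) (fun v hv => ?_)
    (fun v _ hv => ?_)).symm
  · rw [max_eq_right (by linarith), hg0, mul_zero]
  · rw [max_eq_left (by linarith)]
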